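/- arXiv:2507.18279 — 2 statements merged into one kernel-verified Lean document; each statement's English description precedes it below -/
import Mathlib

section
/- Let a ∈ ℤ and set a* = |a|+1 if |a| ≤ 1 and a* = |a| if |a| ≥ 2. Then for all v ∈ Ḣ^{a*}_⋄ and w ∈ Ḣ^{a+1}_⋄ one has |⟨B[v,w], w⟩_{Ḣ^a}| + |⟨B[w,v], w⟩_{Ḣ^a}| ≲ ‖v‖_{Ḣ^{a*}} ‖w‖_{Ḣ^a} ‖w‖_{Ḣ^{a+1}}. -/
open MeasureTheory Set
open scoped BigOperators

noncomputable section

namespace NS2D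

/-- Nonzero Fourier frequencies of the 2D torus `Ω = 𝕋²`. -/
def Freq : Type := {k : ℤ × ℤ // k ≠ 0}

/-- Squared Euclidean modulus `|k|²` of a frequency. -/
def knormSq (k : Freq) : ℝ := (k.1.1 : ℝ) ^ 2 + (k.1.2 : ℝ) ^ 2

/-- Eigenvalue `λ_k = 4π²|k|²` of the periodic Laplacian `−Δ`. -/
def lam (k : Freq) : ℝ := 4 * Real.pi ^ 2 * knormSq k

/-- A divergence-free mean-zero vector field `u ∈ Ḣ_⋄` (or, more generally, an
element of the scale `Ḣ^α_⋄`) on the torus is represented by its Fourier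
coefficients `c k` along the orthonormal basis
`e_k(x) = |k|⁻¹ (k₂, −k₁) exp(2πi k·x)` of divergence-free fields. -/
abbrev Coef : Type := Freq → ℂ

/-- Negation of a frequency. -/
def fneg (k : Freq) : Freq := ⟨-k.1, neg_ne_zero.mpr k.2⟩

/-- The conjugacy condition expressing that the coefficients `c` represent a
real-valued vector field (note `e_{−k} = − conj e_k`). -/
def IsReal (c : Coef) : Prop := ∀ k, c (fneg k) = - (starRingEnd ℂ) (c k)

/-- Squared homogeneous Sobolev norm `‖·‖²_{Ḣ^α} = Σ_k λ_k^α |c k|²`. -/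
def hSq (α : ℝ) (c : Coef) : ℝ := ∑' k, lam k ^ α * ‖c k‖ ^ 2

/-- Homogeneous Sobolev norm `‖·‖_{Ḣ^α}`. -/
def hN (α : ℝ) (c : Coef) : ℝ := Real.sqrt (hSq α c)

/-- Finiteness of the `Ḣ^α`-norm. -/
def FinH (α : ℝ) (c : Coef) : Prop := Summable fun k => lam k ^ α * ‖c k‖ ^ 2

/-- Membership in `Ḣ^α_⋄` (real-valued field with finite `Ḣ^α`-norm). -/
def MemH (α : ℝ) (c : Coef) : Prop := IsReal c ∧ FinH α c

/-- Membership in `Ḣ^∞_⋄ = C^∞(Ω)² ∩ Ḣ_⋄`: all Sobolev norms are finite. -/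
def MemHinf (c : Coef) : Prop := ∀ α : ℝ, MemH α c

/-- Real `Ḣ^α` inner product `⟨·,·⟩_{Ḣ^α}` (for real-valued fields). -/
def hInner (α : ℝ) (c d : Coef) : ℝ := ∑' k, lam k ^ α * (c k * (starRingEnd ℂ) (d k)).re

/-- The `L²` inner product. -/
def innerC (c d : Coef) : ℂ := ∑' k, c k * (starRingEnd ℂ) (d k)

/-- The unit vector `(k₂, −k₁)/|k|` spanning the divergence-free direction at
frequency `k`. -/
def evec (k : Freq) : ℝ × ℝ :=
  ((k.1.2 : ℝ) / Real.sqrt (knormSq k), -((k.1.1 : ℝ)) / Real.sqrt (knormSq k))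

/-- Euclidean dot product on `ℝ²`. -/
def dotR (a b : ℝ × ℝ) : ℝ := a.1 * b.1 + a.2 * b.2

/-- A frequency as a real vector. -/
def fvec (k : Freq) : ℝ × ℝ := ((k.1.1 : ℝ), (k.1.2 : ℝ))

/-- Fourier coefficients (along the basis `e_k`) of the Leray-projected
transport nonlinearity `B[u,v] = P[(u·∇)v]`:
`(B[u,v])^(k) · ē_k = 2πi Σ_{m+n=k, n≠0} c_m d_n (e_m·n)(e_n·e_k)`. -/
def Bc (c d : Coef) : Coef := fun k =>
  (((2 * Real.pi : ℝ) : ℂ) * Complex.I) *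
    ∑' m : Freq,
      if h : k.1 - m.1 ≠ 0 then
        c m * d ⟨k.1 - m.1, h⟩ *
          (((dotR (evec m) (fvec ⟨k.1 - m.1, h⟩) *
            dotR (evec ⟨k.1 - m.1, h⟩) (evec k) : ℝ)) : ℂ)
      else 0

/-- The Laplacian `Δ` acting on the scale: `(Δu)^(k) = −λ_k û(k)`. -/
def lapC (c : Coef) : Coef := fun k => -((lam k : ℝ) : ℂ) * c k

/-- Continuity of a trajectory `t ↦ u(t)`, `t ∈ [0,T]`, for the `Ḣ^α`-norm:
`u ∈ C([0,T], Ḣ^α_⋄)`. -/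
def ContH (α : ℝ) (T : ℝ) (u : ℝ → Coef) : Prop :=
  ∀ t ∈ Icc (0:ℝ) T, ∀ ε > 0, ∃ δ > 0, ∀ s ∈ Icc (0:ℝ) T,
    |s - t| < δ → hN α (u s - u t) < ε

/-- Membership `u ∈ L²([0,T], Ḣ^α_⋄)`. -/
def MemL2H (α : ℝ) (T : ℝ) (u : ℝ → Coef) : Prop :=
  (∀ t ∈ Ioc (0:ℝ) T, MemH α (u t)) ∧
    IntegrableOn (fun t => hSq α (u t)) (Ioc 0 T)

/-- `u` is a strong solution on `[0,T]` of the (Leray-projected) periodic 2D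
Navier–Stokes equations `du/dt + νAu + B[u,u] = f`, `u(0) = θ`, posed in `Ḣ_⋄`:
the Fourier coefficients satisfy the corresponding system of ODEs on `(0,T]`,
the trajectory is continuous into `Ḣ¹_⋄` (in particular at `t = 0`), and lies
in `L²([0,T], Ḣ²_⋄)`. -/
structure IsNSSol (ν : ℝ) (f : Coef) (T : ℝ) (θ : Coef) (u : ℝ → Coef) : Prop where
  init : u 0 = θ
  real : ∀ t ∈ Icc (0:ℝ) T, IsReal (u t)
  deriv : ∀ (k : Freq), ∀ t ∈ Ioc (0:ℝ) T,
    HasDerivAt (fun s => u s k)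
      (f k - ((ν * lam k : ℝ) : ℂ) * u t k - Bc (u t) (u t) k) t
  contH1 : ContH 1 T u
  memL2H2 : MemL2H 2 T u

/-- `U` solves the linear parabolic equation
`dU/dt − νΔU + B[u₀, U] + B[U, u₁] = g`, `U(0) = ξ`, on `[0,T]`. -/
structure IsLinPSol (ν : ℝ) (u₀ u₁ : ℝ → Coef) (g : ℝ → Coef) (T : ℝ) (ξ : Coef)
    (U : ℝ → Coef) : Prop where
  init : U 0 = ξ
  real : ∀ t ∈ Icc (0:ℝ) T, IsReal (U t)
  deriv : ∀ (k : Freq), ∀ t ∈ Ioc (0:ℝ) T,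
    HasDerivAt (fun s => U s k)
      (g t k - ((ν * lam k : ℝ) : ℂ) * U t k - Bc (u₀ t) (U t) k - Bc (U t) (u₁ t) k) t

/-- `U = 𝕀_θ[ξ]` solves the linearisation of Navier–Stokes along the
trajectory `u₀`: `dU/dt − νΔU + B[u₀,U] + B[U,u₀] = 0`, `U(0) = ξ`. -/
def IsLinSol (ν : ℝ) (u₀ : ℝ → Coef) (T : ℝ) (ξ : Coef) (U : ℝ → Coef) : Prop :=
  IsLinPSol ν u₀ u₀ (fun _ => 0) T ξ U

/-- The heat semigroup `S_t = e^{νtΔ}` on the scale `Ḣ^α_⋄`. -/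
def heatS (ν t : ℝ) (c : Coef) : Coef := fun k =>
  ((Real.exp (-(ν * lam k * t)) : ℝ) : ℂ) * c k

/-- Duhamel representation of the solution of the periodic heat equation
`du/dt − νΔu = g`, `u(0) = h`. -/
def heatSol (ν : ℝ) (g : ℝ → Coef) (h : Coef) : ℝ → Coef := fun t k =>
  ((Real.exp (-(ν * lam k * t)) : ℝ) : ℂ) *
    (h k + ∫ s in (0:ℝ)..t, ((Real.exp (ν * lam k * s) : ℝ) : ℂ) * g s k)

/-- Real-linearity of a map on the coefficient space. -/
def IsLinMap (Λ : Coef → Coef) : Prop :=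
  (∀ c d, Λ (c + d) = Λ c + Λ d) ∧ ∀ (r : ℝ) (c : Coef), Λ (r • c) = r • Λ c

/-- `Λ` defines a compact (linear) operator `Ḣ^α_⋄ → Ḣ^β_⋄`: it is linear,
maps `Ḣ^α_⋄` into `Ḣ^β_⋄`, and the image of the `Ḣ^α`-unit ball is totally
bounded for the `Ḣ^β`-norm. -/
def IsCompactOp (α β : ℝ) (Λ : Coef → Coef) : Prop :=
  IsLinMap Λ ∧ (∀ c, MemH α c → MemH β (Λ c)) ∧
    ∀ ε > 0, ∃ S : Finset Coef, ∀ c, MemH α c → hN α c ≤ 1 →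
      ∃ s ∈ S, hN β (Λ c - s) < ε

/-- The index `a* = |a|+1` if `|a| ≤ 1`, `a* = |a|` if `|a| ≥ 2`. -/
def astar (a : ℤ) : ℤ := if |a| ≤ 1 then |a| + 1 else |a|

/-- `i`-th component of the unit vector `evec k`. -/
def evecC (i : Fin 2) (k : Freq) : ℝ := if i = 0 then (evec k).1 else (evec k).2

/-- Fourier coefficients (over all of `ℤ²`) of the scalar component `u_i` of a
divergence-free field with coefficients `c`. -/
def compCoef (i : Fin 2) (c : Coef) : ℤ × ℤ → ℂ := fun n =>
  if h : n ≠ 0 then c ⟨n, h⟩ * ((evecC i ⟨n, h⟩ : ℝ) : ℂ) else 0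

/-- Convolution: Fourier coefficients of a pointwise product of two scalar
functions. -/
def convC (F G : ℤ × ℤ → ℂ) : ℤ × ℤ → ℂ := fun n => ∑' m : ℤ × ℤ, F m * G (n - m)

/-- Squared homogeneous Sobolev norm of a scalar function given by its Fourier
coefficients over `ℤ²`. -/
def hSqScalar (α : ℝ) (F : ℤ × ℤ → ℂ) : ℝ := ∑' k : Freq, lam k ^ α * ‖F k.1‖ ^ 2

/-- `‖u vᵀ‖²_{Ḣ^α} = Σ_{i,j=1}^2 ‖u_i v_j‖²_{Ḣ^α}`. -/
def hSqMat (α : ℝ) (c d : Coef) : ℝ :=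
  ∑ i : Fin 2, ∑ j : Fin 2, hSqScalar α (convC (compCoef i c) (compCoef j d))

/-- The character `exp(2πi k·x)`. -/
def efun (k : Freq) (x : ℝ × ℝ) : ℂ :=
  Complex.exp ((((2 * Real.pi : ℝ)) : ℂ) * Complex.I *
    ((k.1.1 : ℂ) * (x.1 : ℂ) + (k.1.2 : ℂ) * (x.2 : ℂ)))

/-- Pointwise evaluation of the `i`-th component of the field. -/
def evalComp (i : Fin 2) (c : Coef) (x : ℝ × ℝ) : ℂ :=
  ∑' k, c k * ((evecC i k : ℝ) : ℂ) * efun k x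

/-- Supremum norm (`C⁰`-norm) of the field. -/
def c0N (c : Coef) : ℝ := ⨆ x : ℝ × ℝ, max ‖evalComp 0 c x‖ ‖evalComp 1 c x‖

/-- The partial derivative `∂_j` acting on divergence-free fields. -/
def pderiv (j : Fin 2) (c : Coef) : Coef := fun k =>
  (((2 * Real.pi : ℝ) : ℂ) * Complex.I) *
    (if j = 0 then ((k.1.1 : ℤ) : ℂ) else ((k.1.2 : ℤ) : ℂ)) * c k

/-- `C¹`-norm of the field. -/
def c1N (c : Coef) : ℝ := c0N c + c0N (pderiv 0 c) + c0N (pderiv 1 c)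

/-- Norm of the multiplier space `B^ℓ`: `C^ℓ(Ω)²` for `ℓ ≤ 1` and `Ḣ^ℓ` for
`ℓ ≥ 2`. -/
def bN (ℓ : ℕ) (c : Coef) : ℝ :=
  if ℓ = 0 then c0N c else if ℓ = 1 then c1N c else hN (ℓ : ℝ) c

end NS2D

namespace NS2D

/-! ### Abstract trilinear estimates -/

lemma cs_tsum {ι : Type*} (A B : ι → ℝ) (hA : ∀ i, 0 ≤ A i) (hB : ∀ i, 0 ≤ B i)
    (sA : Summable fun i => A i ^ 2) (sB : Summable fun i => B i ^ 2) :
    (Summable fun i => A i * B i) ∧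
      ∑' i, A i * B i ≤ Real.sqrt (∑' i, A i ^ 2) * Real.sqrt (∑' i, B i ^ 2) := by
  have := Real.summable_and_inner_le_Lp_mul_Lq_tsum_of_nonneg
    (Real.HolderConjugate.two_two) hA hB (by simpa using sA) (by simpa using sB)
  simpa [Real.sqrt_eq_rpow] using this

/-- The `ℓ²` norm. -/
def N2 {ι : Type*} (X : ι → ℝ) : ℝ := Real.sqrt (∑' i, X i ^ 2)

lemma N2_nonneg {ι : Type*} (X : ι → ℝ) : 0 ≤ N2 X := Real.sqrt_nonneg _

lemma prod_l2 {G κ : Type*} (e : κ ≃ G × G) (X Y : G → ℝ)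
    (sX : Summable fun i => X i ^ 2) (sY : Summable fun i => Y i ^ 2) :
    (Summable fun p => (X (e p).1 * Y (e p).2) ^ 2) ∧
      Real.sqrt (∑' p, (X (e p).1 * Y (e p).2) ^ 2) = N2 X * N2 Y := by
  have h1 : Summable fun q : G × G => X q.1 ^ 2 * Y q.2 ^ 2 :=
    sX.mul_of_nonneg sY (fun i => sq_nonneg _) (fun i => sq_nonneg _)
  have h2 : (fun p => (X (e p).1 * Y (e p).2) ^ 2)
      = (fun q : G × G => X q.1 ^ 2 * Y q.2 ^ 2) ∘ e := by
    funext p; simp [mul_pow]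
  constructor
  · rw [h2]; exact e.summable_iff.mpr h1
  · rw [h2, show (∑' p, ((fun q : G × G => X q.1 ^ 2 * Y q.2 ^ 2) ∘ e) p)
      = ∑' q : G × G, X q.1 ^ 2 * Y q.2 ^ 2 from
        e.tsum_eq (fun q : G × G => X q.1 ^ 2 * Y q.2 ^ 2),
      ← sX.tsum_mul_tsum sY h1, Real.sqrt_mul (tsum_nonneg fun i => sq_nonneg _)]
    rfl

lemma tri_equiv {G κ : Type*} (e e' : κ ≃ G × G) (X Y Z P : G → ℝ)
    (hX : ∀ i, 0 ≤ X i) (hY : ∀ i, 0 ≤ Y i) (hZ : ∀ i, 0 ≤ Z i) (hP : ∀ i, 0 ≤ P i)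
    (sX : Summable fun i => X i ^ 2) (sY : Summable fun i => Y i ^ 2)
    (sZ : Summable fun i => Z i ^ 2) (sP : Summable fun i => P i ^ 2) :
    (Summable fun p => (X (e p).1 * Y (e p).2) * (Z (e' p).1 * P (e' p).2)) ∧
      ∑' p, (X (e p).1 * Y (e p).2) * (Z (e' p).1 * P (e' p).2)
        ≤ N2 X * N2 Y * (N2 Z * N2 P) := by
  have h1 := prod_l2 e X Y sX sY
  have h2 := prod_l2 e' Z P sZ sP
  have := cs_tsum (fun p => X (e p).1 * Y (e p).2) (fun p => Z (e' p).1 * P (e' p).2)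
    (fun p => mul_nonneg (hX _) (hY _)) (fun p => mul_nonneg (hZ _) (hP _)) h1.1 h2.1
  rw [h1.2, h2.2] at this
  exact this

/-- `(k, m) ↦ (m, k - m)`. -/
def eqv1 (G : Type*) [AddCommGroup G] : G × G ≃ G × G where
  toFun p := (p.2, p.1 - p.2)
  invFun q := (q.1 + q.2, q.1)
  left_inv p := by ext <;> simp
  right_inv p := by ext <;> simp

/-- `(k, m) ↦ (k, k - m)`. -/
def eqv2 (G : Type*) [AddCommGroup G] : G × G ≃ G × G where
  toFun p := (p.1, p.1 - p.2)
  invFun q := (q.1, q.1 - q.2)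
  left_inv p := by ext <;> simp
  right_inv p := by ext <;> simp

lemma tri_sum {G : Type*} [AddCommGroup G] (X Y Z P : G → ℝ)
    (hX : ∀ i, 0 ≤ X i) (hY : ∀ i, 0 ≤ Y i) (hZ : ∀ i, 0 ≤ Z i) (hP : ∀ i, 0 ≤ P i)
    (sX : Summable fun i => X i ^ 2) (sY : Summable fun i => Y i ^ 2)
    (sZ : Summable fun i => Z i ^ 2) (sP : Summable fun i => P i ^ 2) :
    (Summable fun p : G × G => X p.2 * Y (p.1 - p.2) * Z p.1 * (P p.2 + P (p.1 - p.2) + P p.1)) ∧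
      ∑' p : G × G, X p.2 * Y (p.1 - p.2) * Z p.1 * (P p.2 + P (p.1 - p.2) + P p.1)
        ≤ 3 * (N2 X * N2 Y * N2 Z * N2 P) := by
  have h1 := tri_equiv (eqv1 G) (Equiv.refl _) X Y Z P hX hY hZ hP sX sY sZ sP
  have h2 := tri_equiv (eqv1 G) (eqv2 G) X Y Z P hX hY hZ hP sX sY sZ sP
  have h3 := tri_equiv (Equiv.refl _) (eqv2 G) Z X P Y hZ hX hP hY sZ sX sP sY
  have e : (fun p : G × G => X p.2 * Y (p.1 - p.2) * Z p.1 * (P p.2 + P (p.1 - p.2) + P p.1))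
     = fun p => ((X (eqv1 G p).1 * Y (eqv1 G p).2) *
          (Z ((Equiv.refl (G × G)) p).1 * P ((Equiv.refl (G × G)) p).2)
        + (X (eqv1 G p).1 * Y (eqv1 G p).2) * (Z (eqv2 G p).1 * P (eqv2 G p).2))
        + (Z ((Equiv.refl (G × G)) p).1 * X ((Equiv.refl (G × G)) p).2) *
          (P (eqv2 G p).1 * Y (eqv2 G p).2) := by
    funext p; simp [eqv1, eqv2]; ring
  rw [e]
  refine ⟨(h1.1.add h2.1).add h3.1, ?_⟩
  rw [(h1.1.add h2.1).tsum_add h3.1, h1.1.tsum_add h2.1]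
  calc _ ≤ _ := add_le_add (add_le_add h1.2 h2.2) h3.2
    _ = _ := by ring

/-! ### Lattice sums -/

lemma line_nat (N : ℝ) (hN : 1 ≤ N) :
    (Summable fun j : ℕ => 1 / (1 + ((j : ℝ) + 1) ^ 2 / N ^ 2)) ∧
      ∑' j : ℕ, 1 / (1 + ((j : ℝ) + 1) ^ 2 / N ^ 2) ≤ 2 * N := by
  have hN0 : 0 < N := by linarith
  have key : ∀ n : ℕ, ∑ j ∈ Finset.range n, 1 / (1 + ((j : ℝ) + 1) ^ 2 / N ^ 2)
      ≤ 2 * N - 2 * N ^ 2 / (N + n) := by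
    intro n
    induction n with
    | zero => simp; field_simp; simp
    | succ n ih =>
      rw [Finset.sum_range_succ]
      have hn : (0 : ℝ) ≤ n := Nat.cast_nonneg n
      have : 1 / (1 + ((n : ℝ) + 1) ^ 2 / N ^ 2)
          ≤ 2 * N ^ 2 / (N + n) - 2 * N ^ 2 / (N + (n + 1)) := by
        have e1 : 2 * N ^ 2 / (N + n) - 2 * N ^ 2 / (N + (n + 1))
            = 2 * N ^ 2 / ((N + n) * (N + (n + 1))) := by
          field_simp; ring
        have e2 : 1 / (1 + ((n : ℝ) + 1) ^ 2 / N ^ 2) = N ^ 2 / (N ^ 2 + (n + 1) ^ 2) := by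
          field_simp
        rw [e1, e2, div_le_div_iff₀ (by positivity) (by positivity)]
        have : (N + n) * (N + (n + 1)) ≤ 2 * (N ^ 2 + (n + 1) ^ 2) := by
          nlinarith [sq_nonneg (N - (n + 1))]
        nlinarith [sq_nonneg N]
      push_cast
      linarith
  have key2 : ∀ n : ℕ, ∑ j ∈ Finset.range n, 1 / (1 + ((j : ℝ) + 1) ^ 2 / N ^ 2) ≤ 2 * N := by
    intro n
    have : 0 ≤ 2 * N ^ 2 / (N + n) := by positivity
    linarith [key n]
  exact ⟨summable_of_sum_range_le (fun n => by positivity) key2,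
    Real.tsum_le_of_sum_range_le (fun n => by positivity) key2⟩

lemma int_sum (f : ℤ → ℝ) (g : ℕ → ℝ) (B : ℝ) (sg : Summable g) (b : ∑' j, g j ≤ B)
    (h1 : ∀ j : ℕ, f ((j : ℤ) + 1) = g j) (h2 : ∀ j : ℕ, f (-((j : ℤ) + 1)) = g j) :
    Summable f ∧ ∑' j, f j ≤ f 0 + B + B := by
  have s0 : Summable fun j : ℕ => f (j : ℤ) := by
    rw [← summable_nat_add_iff 1]
    simpa [h1] using sg
  have s1 : Summable fun j : ℕ => f (-((j : ℤ) + 1)) := by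
    simpa only [h2] using sg
  refine ⟨Summable.of_nat_of_neg_add_one s0 s1, ?_⟩
  rw [tsum_of_nat_of_neg_add_one s0 s1, s0.tsum_eq_zero_add]
  have e1 : ∑' j : ℕ, f ((j + 1 : ℕ) : ℤ) = ∑' j, g j :=
    tsum_congr fun j => by rw [← h1]; push_cast; rfl
  have e2 : ∑' j : ℕ, f (-((j : ℤ) + 1)) = ∑' j, g j := tsum_congr h2
  rw [e1, e2]
  simp only [Nat.cast_zero]
  gcongr

lemma line_int (N : ℝ) (hN : 1 ≤ N) :
    (Summable fun j : ℤ => 1 / (1 + (j : ℝ) ^ 2 / N ^ 2)) ∧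
      ∑' j : ℤ, 1 / (1 + (j : ℝ) ^ 2 / N ^ 2) ≤ 5 * N := by
  obtain ⟨s, b⟩ := line_nat N hN
  obtain ⟨s', b'⟩ := int_sum (fun j : ℤ => 1 / (1 + (j : ℝ) ^ 2 / N ^ 2)) _ _ s b
    (fun j => by push_cast; rfl) (fun j => by push_cast; rw [neg_sq])
  refine ⟨s', b'.trans ?_⟩
  have e3 : 1 / (1 + ((0 : ℤ) : ℝ) ^ 2 / N ^ 2) = 1 := by simp
  rw [e3]
  linarith

/-- The weight `1 / (1 + |k|² / N²)` on `ℤ²`. -/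
def PN (N : ℝ) (k : ℤ × ℤ) : ℝ := 1 / (1 + ((k.1 : ℝ) ^ 2 + (k.2 : ℝ) ^ 2) / N ^ 2)

lemma PN_nonneg (N : ℝ) (k : ℤ × ℤ) : 0 ≤ PN N k := by unfold PN; positivity

lemma PN_sum (N : ℝ) (hN : 1 ≤ N) :
    (Summable fun k => PN N k ^ 2) ∧ N2 (PN N) ≤ 5 * N := by
  have hN0 : 0 < N := by linarith
  obtain ⟨s, b⟩ := line_int N hN
  have s2 := s.mul_of_nonneg s (fun j => by positivity) (fun j => by positivity)
  have le : ∀ k : ℤ × ℤ, PN N k ^ 2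
      ≤ 1 / (1 + (k.1 : ℝ) ^ 2 / N ^ 2) * (1 / (1 + (k.2 : ℝ) ^ 2 / N ^ 2)) := by
    intro k
    have h1 : (0 : ℝ) ≤ (k.1 : ℝ) ^ 2 / N ^ 2 := by positivity
    have h2 : (0 : ℝ) ≤ (k.2 : ℝ) ^ 2 / N ^ 2 := by positivity
    unfold PN
    rw [add_div, div_mul_div_comm, div_pow]
    set x := (k.1 : ℝ) ^ 2 / N ^ 2
    set y := (k.2 : ℝ) ^ 2 / N ^ 2
    rw [one_pow, one_mul]
    apply one_div_le_one_div_of_le (by positivity)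
    nlinarith [mul_nonneg h1 h2]
  have sP : Summable fun k => PN N k ^ 2 :=
    Summable.of_nonneg_of_le (fun k => sq_nonneg _) le s2
  refine ⟨sP, ?_⟩
  unfold N2
  rw [show 5 * N = Real.sqrt ((5 * N) ^ 2) from (Real.sqrt_sq (by positivity)).symm]
  apply Real.sqrt_le_sqrt
  calc ∑' k, PN N k ^ 2 ≤ _ := sP.tsum_le_tsum le s2
    _ = _ := (s.tsum_mul_tsum s s2).symm
    _ ≤ (5 * N) ^ 2 := by
      rw [sq (5 * N)]
      exact mul_le_mul b b (tsum_nonneg fun j => by positivity) (by positivity)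

/-! ### Frequencies -/

/-- `2π|k|`. -/
def rr (k : Freq) : ℝ := Real.sqrt (lam k)

lemma knormSq_ge (k : Freq) : 1 ≤ knormSq k := by
  obtain ⟨⟨x, y⟩, hk⟩ := k
  unfold knormSq
  simp only
  have h : 1 ≤ x ^ 2 + y ^ 2 := by
    by_contra hcon
    have hx : x ^ 2 = 0 := by nlinarith [sq_nonneg x, sq_nonneg y]
    have hy : y ^ 2 = 0 := by nlinarith [sq_nonneg x, sq_nonneg y]
    apply hk
    simp only [Prod.mk_eq_zero]
    exact ⟨by simpa using hx, by simpa using hy⟩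
  exact_mod_cast h

lemma knormSq_le_lam (k : Freq) : knormSq k ≤ lam k := by
  unfold lam
  have := knormSq_ge k
  nlinarith [Real.pi_gt_three, mul_self_nonneg (Real.pi - 3)]

lemma lam_ge (k : Freq) : 1 ≤ lam k := (knormSq_ge k).trans (knormSq_le_lam k)

lemma lam_pos (k : Freq) : 0 < lam k := by linarith [lam_ge k]

lemma rr_sq (k : Freq) : rr k ^ 2 = lam k := Real.sq_sqrt (lam_pos k).le

lemma rr_ge (k : Freq) : 1 ≤ rr k := Real.one_le_sqrt.mpr (lam_ge k)

lemma rr_pos (k : Freq) : 0 < rr k := by linarith [rr_ge k]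

lemma rr_eq (k : Freq) : rr k = 2 * Real.pi * Real.sqrt (knormSq k) := by
  unfold rr lam
  rw [show 4 * Real.pi ^ 2 * knormSq k = (2 * Real.pi) ^ 2 * knormSq k by ring,
    Real.sqrt_mul (sq_nonneg _), Real.sqrt_sq (by positivity)]

lemma sqrt_knormSq (k : Freq) :
    Real.sqrt (knormSq k) = ‖((k.1.1 : ℂ) + (k.1.2 : ℂ) * Complex.I)‖ := by
  have := Complex.norm_add_mul_I (k.1.1 : ℝ) (k.1.2 : ℝ)
  push_cast at this
  rw [this]; rfl

lemma rr_tri (k m n : Freq) (h : n.1 = k.1 - m.1) :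
    rr k ≤ rr m + rr n ∧ rr m ≤ rr n + rr k ∧ rr n ≤ rr m + rr k := by
  simp only [rr_eq, sqrt_knormSq]
  have h1 : (n.1.1 : ℂ) = k.1.1 - m.1.1 := by rw [h]; simp
  have h2 : (n.1.2 : ℂ) = k.1.2 - m.1.2 := by rw [h]; simp
  set K : ℂ := (k.1.1 : ℂ) + (k.1.2 : ℂ) * Complex.I
  set M : ℂ := (m.1.1 : ℂ) + (m.1.2 : ℂ) * Complex.I
  have hn : (n.1.1 : ℂ) + (n.1.2 : ℂ) * Complex.I = K - M := by
    rw [h1, h2]; simp only [K, M]; ring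
  rw [hn]
  have hpi : 0 < 2 * Real.pi := by positivity
  have t1 : ‖K‖ ≤ ‖M‖ + ‖K - M‖ := by
    calc ‖K‖ = ‖M + (K - M)‖ := by ring_nf
      _ ≤ _ := norm_add_le _ _
  have t2 : ‖M‖ ≤ ‖K - M‖ + ‖K‖ := by
    calc ‖M‖ = ‖K - (K - M)‖ := by ring_nf
      _ ≤ ‖K‖ + ‖K - M‖ := norm_sub_le _ _
      _ = _ := by ring
  have t3 : ‖K - M‖ ≤ ‖M‖ + ‖K‖ := by
    rw [add_comm]; exact norm_sub_le _ _
  refine ⟨?_, ?_, ?_⟩ <;> rw [← mul_add] <;> gcongr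

lemma dotR_abs (a b : ℝ × ℝ) :
    |dotR a b| ≤ Real.sqrt (a.1 ^ 2 + a.2 ^ 2) * Real.sqrt (b.1 ^ 2 + b.2 ^ 2) := by
  rw [← Real.sqrt_mul (by positivity)]
  apply Real.abs_le_sqrt
  unfold dotR
  nlinarith [sq_nonneg (a.1 * b.2 - a.2 * b.1)]

lemma evec_norm (k : Freq) : (evec k).1 ^ 2 + (evec k).2 ^ 2 = 1 := by
  have h : 0 < knormSq k := by linarith [knormSq_ge k]
  unfold evec
  simp only [div_pow, Real.sq_sqrt h.le, neg_sq]
  rw [← add_div, div_eq_one_iff_eq h.ne']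
  unfold knormSq; ring

/-- `2π |e_m · n|`. -/
def EE (m n : Freq) : ℝ := 2 * Real.pi * |dotR (evec m) (fvec n)|

lemma EE_nonneg (m n : Freq) : 0 ≤ EE m n := by unfold EE; positivity

lemma EE_le (m n : Freq) : EE m n ≤ rr n := by
  unfold EE
  rw [rr_eq]
  have := dotR_abs (evec m) (fvec n)
  rw [evec_norm, Real.sqrt_one, one_mul] at this
  have hpi : 0 < 2 * Real.pi := by positivity
  exact mul_le_mul_of_nonneg_left this hpi.le

lemma dot_shift (k m n : Freq) (h : n.1 = k.1 - m.1) :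
    dotR (evec m) (fvec n) = dotR (evec m) (fvec k) := by
  have h1 : (n.1.1 : ℝ) = k.1.1 - m.1.1 := by rw [h]; simp
  have h2 : (n.1.2 : ℝ) = k.1.2 - m.1.2 := by rw [h]; simp
  unfold dotR fvec evec
  simp only [h1, h2]
  ring

lemma EE_le' (k m n : Freq) (h : n.1 = k.1 - m.1) : EE m n ≤ rr k := by
  have : EE m n = EE m k := by unfold EE; rw [dot_shift k m n h]
  rw [this]; exact EE_le m k

lemma dot_ee_le (n k : Freq) : |dotR (evec n) (evec k)| ≤ 1 := by
  have := dotR_abs (evec n) (evec k)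
  simpa [evec_norm] using this

/-! ### The trilinear form -/

/-- Extension by zero to `ℤ²`. -/
def ext0 (X : Freq → ℝ) (n : ℤ × ℤ) : ℝ := if h : n ≠ 0 then X ⟨n, h⟩ else 0

lemma ext0_val (X : Freq → ℝ) (k : Freq) : ext0 X k.1 = X k := by
  unfold ext0
  rw [dif_pos k.2]
  rfl

lemma ext0_nonneg (X : Freq → ℝ) (hX : ∀ k, 0 ≤ X k) (n : ℤ × ℤ) : 0 ≤ ext0 X n := by
  unfold ext0
  split_ifs
  · exact hX _
  · exact le_rfl

lemma val_inj : Function.Injective (fun k : Freq => k.1) := Subtype.val_injective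

lemma ext0_supp (X : Freq → ℝ) (n : ℤ × ℤ) (hn : n ∉ Set.range (fun k : Freq => k.1)) :
    ext0 X n ^ 2 = 0 := by
  have : n = 0 := by
    by_contra h
    exact hn ⟨⟨n, h⟩, rfl⟩
  simp [ext0, this]

lemma ext0_summable (X : Freq → ℝ) (h : Summable fun k => X k ^ 2) :
    Summable fun n => ext0 X n ^ 2 := by
  rw [← val_inj.summable_iff (ext0_supp X)]
  convert h using 2 with k
  simp [ext0_val]

lemma ext0_N2 (X : Freq → ℝ) : N2 (ext0 X) = N2 X := by
  unfold N2
  congr 1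
  rw [← val_inj.tsum_eq (f := fun n => ext0 X n ^ 2)]
  · simp [ext0_val]
  · intro n hn
    by_contra hcon
    exact hn (ext0_supp X n hcon)

/-- The summand of the trilinear form `⟨B[c,d], e⟩_{Ḣ^a}`. -/
def FF (a : ℝ) (c d e : Coef) (p : Freq × Freq) : ℂ :=
  ((lam p.1 ^ a : ℝ) : ℂ) * ((((2 * Real.pi : ℝ) : ℂ) * Complex.I) *
    (if h : p.1.1 - p.2.1 ≠ 0 then
        c p.2 * d ⟨p.1.1 - p.2.1, h⟩ *
          (((dotR (evec p.2) (fvec ⟨p.1.1 - p.2.1, h⟩) *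
            dotR (evec ⟨p.1.1 - p.2.1, h⟩) (evec p.1) : ℝ)) : ℂ)
      else 0) * (starRingEnd ℂ) (e p.1))

lemma FF_zero (a : ℝ) (c d e : Coef) (k m : Freq) (h : k.1 - m.1 = 0) :
    FF a c d e (k, m) = 0 := by
  simp [FF, h]

lemma FF_eq (a : ℝ) (c d e : Coef) (k m n : Freq) (h : n.1 = k.1 - m.1) :
    FF a c d e (k, m) = ((lam k ^ a : ℝ) : ℂ) * ((((2 * Real.pi : ℝ) : ℂ) * Complex.I) *
      (c m * d n * (((dotR (evec m) (fvec n) * dotR (evec n) (evec k) : ℝ)) : ℂ)) *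
        (starRingEnd ℂ) (e k)) := by
  have h' : k.1 - m.1 ≠ 0 := h ▸ n.2
  have hn : n = ⟨k.1 - m.1, h'⟩ := Subtype.ext h
  subst hn
  unfold FF
  rw [dif_pos h']

lemma FF_norm (a : ℝ) (c d e : Coef) (k m n : Freq) (h : n.1 = k.1 - m.1) :
    ‖FF a c d e (k, m)‖ ≤ lam k ^ a * (‖c m‖ * ‖d n‖ * ‖e k‖ * EE m n) := by
  rw [FF_eq a c d e k m n h]
  have hl : 0 ≤ lam k ^ a := Real.rpow_nonneg (lam_pos k).le _
  rw [norm_mul, Complex.norm_real, Real.norm_of_nonneg hl]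
  apply mul_le_mul_of_nonneg_left _ hl
  simp only [norm_mul, Complex.norm_real, Complex.norm_I, RCLike.norm_conj, Real.norm_eq_abs]
  rw [abs_of_pos Real.pi_pos]
  have h2 := dot_ee_le n k
  have : ‖c m‖ * ‖d n‖ * ‖e k‖ * EE m n * |dotR (evec n) (evec k)|
      ≤ ‖c m‖ * ‖d n‖ * ‖e k‖ * EE m n * 1 := by
    have := EE_nonneg m n
    gcongr
  calc _ = ‖c m‖ * ‖d n‖ * ‖e k‖ * EE m n * |dotR (evec n) (evec k)| := by
        unfold EE; simp; ring
    _ ≤ _ := by linarith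

lemma hInner_eq (a : ℝ) (c d e : Coef) (hs : Summable (FF a c d e)) :
    hInner a (Bc c d) e = (∑' p, FF a c d e p).re := by
  rw [hs.tsum_prod, Complex.re_tsum hs.prod]
  unfold hInner
  refine tsum_congr fun k => ?_
  have : ∑' m, FF a c d e (k, m) = ((lam k ^ a : ℝ) : ℂ) * (Bc c d k * (starRingEnd ℂ) (e k)) := by
    unfold FF Bc
    simp only
    rw [tsum_mul_left, tsum_mul_right, tsum_mul_left]
  rw [this, Complex.re_ofReal_mul]

lemma core (a : ℝ) (c d e : Coef) (X Y Z : Freq → ℝ) (P : ℤ × ℤ → ℝ)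
    (hX : ∀ i, 0 ≤ X i) (hY : ∀ i, 0 ≤ Y i) (hZ : ∀ i, 0 ≤ Z i) (hP : ∀ i, 0 ≤ P i)
    (sX : Summable fun i => X i ^ 2) (sY : Summable fun i => Y i ^ 2)
    (sZ : Summable fun i => Z i ^ 2) (sP : Summable fun i => P i ^ 2)
    (H : ∀ k m n : Freq, n.1 = k.1 - m.1 →
      lam k ^ a * (‖c m‖ * ‖d n‖ * ‖e k‖ * EE m n)
        ≤ X m * Y n * Z k * (P m.1 + P n.1 + P k.1)) :
    Summable (FF a c d e) ∧
      |hInner a (Bc c d) e| ≤ 3 * (N2 X * N2 Y * N2 Z * N2 P) := by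
  obtain ⟨s, b⟩ := tri_sum (ext0 X) (ext0 Y) (ext0 Z) P (ext0_nonneg X hX) (ext0_nonneg Y hY)
    (ext0_nonneg Z hZ) hP (ext0_summable X sX) (ext0_summable Y sY) (ext0_summable Z sZ) sP
  simp only [ext0_N2] at b
  set T : (ℤ × ℤ) × (ℤ × ℤ) → ℝ := fun p => ext0 X p.2 * ext0 Y (p.1 - p.2) * ext0 Z p.1 *
    (P p.2 + P (p.1 - p.2) + P p.1) with hT
  have hT0 : ∀ p, 0 ≤ T p := by
    intro p
    have h1 := ext0_nonneg X hX p.2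
    have h2 := ext0_nonneg Y hY (p.1 - p.2)
    have h3 := ext0_nonneg Z hZ p.1
    have h4 := hP p.2
    have h5 := hP (p.1 - p.2)
    have h6 := hP p.1
    simp only [hT]
    positivity
  let j : Freq × Freq → (ℤ × ℤ) × (ℤ × ℤ) := fun p => (p.1.1, p.2.1)
  have hj : Function.Injective j := by
    intro p q hpq
    have h1 : p.1.1 = q.1.1 := congrArg Prod.fst hpq
    have h2 : p.2.1 = q.2.1 := congrArg Prod.snd hpq
    exact Prod.ext (Subtype.ext h1) (Subtype.ext h2)
  have le : ∀ p, ‖FF a c d e p‖ ≤ (T ∘ j) p := by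
    rintro ⟨k, m⟩
    by_cases h : k.1 - m.1 = 0
    · rw [FF_zero a c d e k m h, norm_zero]
      exact hT0 _
    · obtain ⟨n, hn⟩ : ∃ n : Freq, n.1 = k.1 - m.1 := ⟨⟨k.1 - m.1, h⟩, rfl⟩
      refine (FF_norm a c d e k m n hn).trans ((H k m n hn).trans ?_)
      have e1 : (T ∘ j) (k, m) = ext0 X m.1 * ext0 Y (k.1 - m.1) * ext0 Z k.1 *
        (P m.1 + P (k.1 - m.1) + P k.1) := rfl
      rw [e1, ← hn, ext0_val X m, ext0_val Y n, ext0_val Z k]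
  have sj : Summable (T ∘ j) := s.comp_injective hj
  have sF : Summable (FF a c d e) := Summable.of_norm_bounded sj le
  refine ⟨sF, ?_⟩
  rw [hInner_eq a c d e sF]
  calc _ ≤ ‖∑' p, FF a c d e p‖ := Complex.abs_re_le_norm _
    _ ≤ ∑' p, (T ∘ j) p := tsum_of_norm_bounded sj.hasSum le
    _ ≤ ∑' p, T p := sj.tsum_le_tsum_of_inj j hj (fun c _ => hT0 c) (fun _ => le_rfl) s
    _ ≤ _ := b

/-! ### Weighted coefficients -/

lemma lam_rpow (k : Freq) (α : ℤ) : lam k ^ (α : ℝ) = (rr k ^ α) ^ 2 := by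
  rw [Real.rpow_intCast, ← rr_sq, ← zpow_natCast, ← zpow_natCast, ← zpow_mul, ← zpow_mul,
    mul_comm]

lemma lam_rpow' (k : Freq) (α : ℤ) : lam k ^ (α : ℝ) = rr k ^ (2 * α) := by
  rw [lam_rpow, ← zpow_natCast, ← zpow_mul, mul_comm]
  rfl

/-- Weighted coefficients. -/
def WW (α : ℤ) (c : Coef) (k : Freq) : ℝ := rr k ^ α * ‖c k‖

lemma WW_nonneg (α : ℤ) (c : Coef) (k : Freq) : 0 ≤ WW α c k := by
  have := rr_pos k
  unfold WW; positivity

lemma WW_sq (α : ℤ) (c : Coef) (k : Freq) : WW α c k ^ 2 = lam k ^ (α : ℝ) * ‖c k‖ ^ 2 := by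
  rw [lam_rpow]; unfold WW; ring

lemma WW_summable (α : ℤ) (c : Coef) (h : FinH (α : ℝ) c) : Summable fun k => WW α c k ^ 2 := by
  simp only [WW_sq]; exact h

lemma WW_N2 (α : ℤ) (c : Coef) : N2 (WW α c) = hN (α : ℝ) c := by
  unfold N2 hN hSq; simp only [WW_sq]

lemma FinH_mono (α β : ℝ) (h : α ≤ β) (c : Coef) (hc : FinH β c) : FinH α c := by
  refine Summable.of_nonneg_of_le (fun k => ?_) (fun k => ?_) hc
  · have := Real.rpow_nonneg (lam_pos k).le α
    positivity
  · gcongr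
    exact lam_ge k

lemma N2_smul {ι : Type*} (K : ℝ) (hK : 0 ≤ K) (X : ι → ℝ) :
    N2 (fun i => K * X i) = K * N2 X := by
  unfold N2
  simp only [mul_pow]
  rw [tsum_mul_left, Real.sqrt_mul (sq_nonneg _), Real.sqrt_sq hK]

lemma inv_rr_le (k : Freq) : 1 / rr k ^ 2 ≤ 2 * PN 1 k.1 := by
  have h1 := knormSq_ge k
  have h2 := knormSq_le_lam k
  have : PN 1 k.1 = 1 / (1 + knormSq k) := by unfold PN knormSq; simp
  rw [rr_sq, this, mul_one_div, div_le_div_iff₀ (lam_pos k) (by linarith)]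
  linarith

/-- The pointwise kernel bound. -/
def KerB (K : ℝ) (a α β γ : ℤ) : Prop :=
  ∀ p q s E : ℝ, 1 ≤ p → 1 ≤ q → 1 ≤ s → s ≤ p + q → p ≤ q + s → q ≤ p + s → 0 ≤ E → E ≤ q →
    E ≤ s → s ^ (2 * a) * E ≤ K * (p ^ α * q ^ β * s ^ γ * (1 / p ^ 2 + 1 / q ^ 2 + 1 / s ^ 2))

lemma noncrit (K : ℝ) (hK : 0 ≤ K) (a α β γ : ℤ) (hker : KerB K a α β γ) (c d e : Coef)
    (hc : FinH (α : ℝ) c) (hd : FinH (β : ℝ) d) (he : FinH (γ : ℝ) e) :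
    Summable (FF (a : ℝ) c d e) ∧
      |hInner (a : ℝ) (Bc c d) e| ≤ 30 * K * hN (α : ℝ) c * hN (β : ℝ) d * hN (γ : ℝ) e := by
  obtain ⟨sP, bP⟩ := PN_sum 1 le_rfl
  have sX : Summable fun k => (2 * K * WW α c k) ^ 2 := by
    simp only [mul_pow _ (WW α c _)]
    exact (WW_summable α c hc).mul_left _
  have hcore := core (a : ℝ) c d e (fun k => 2 * K * WW α c k) (WW β d) (WW γ e) (PN 1)
    (fun k => by have := WW_nonneg α c k; positivity) (WW_nonneg β d) (WW_nonneg γ e) (PN_nonneg 1)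
    sX (WW_summable β d hd) (WW_summable γ e he) sP ?_
  · refine ⟨hcore.1, hcore.2.trans ?_⟩
    rw [N2_smul _ (by positivity), WW_N2, WW_N2, WW_N2]
    have h1 : 0 ≤ hN (α : ℝ) c := Real.sqrt_nonneg _
    have h2 : 0 ≤ hN (β : ℝ) d := Real.sqrt_nonneg _
    have h3 : 0 ≤ hN (γ : ℝ) e := Real.sqrt_nonneg _
    calc _ ≤ 3 * (2 * K * hN (α : ℝ) c * hN (β : ℝ) d * hN (γ : ℝ) e * (5 * 1)) := by gcongr
      _ = _ := by ring
  · intro k m n h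
    obtain ⟨t1, t2, t3⟩ := rr_tri k m n h
    have := hker (rr m) (rr n) (rr k) (EE m n) (rr_ge m) (rr_ge n) (rr_ge k) t1 t2 t3
      (EE_nonneg m n) (EE_le m n) (EE_le' k m n h)
    rw [lam_rpow']
    have hp := rr_pos m
    have hq := rr_pos n
    have hs := rr_pos k
    calc rr k ^ (2 * a) * (‖c m‖ * ‖d n‖ * ‖e k‖ * EE m n)
        = (‖c m‖ * ‖d n‖ * ‖e k‖) * (rr k ^ (2 * a) * EE m n) := by ring
      _ ≤ (‖c m‖ * ‖d n‖ * ‖e k‖) * (K * (rr m ^ α * rr n ^ β * rr k ^ γ *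
            (2 * PN 1 m.1 + 2 * PN 1 n.1 + 2 * PN 1 k.1))) := by
          apply mul_le_mul_of_nonneg_left _ (by positivity)
          refine this.trans ?_
          have i1 := inv_rr_le m
          have i2 := inv_rr_le n
          have i3 := inv_rr_le k
          gcongr
      _ = _ := by unfold WW; ring

/-! ### Kernel bounds -/

lemma ker_base (c : ℕ) (σ p τ E : ℝ) (hσ : 0 ≤ σ) (hp : 1 ≤ p) (ht : 1 ≤ τ) (h : σ ≤ p + τ)
    (hE : 0 ≤ E) (hE' : E ≤ τ) : σ ^ c * E ≤ 2 ^ c * (p ^ c * τ + τ ^ (c + 1)) := by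
  have h1 : σ ^ c ≤ 2 ^ c * (p ^ c + τ ^ c) := by
    calc σ ^ c ≤ (p + τ) ^ c := by gcongr
      _ ≤ 2 ^ (c - 1) * (p ^ c + τ ^ c) := add_pow_le (by linarith) (by linarith) c
      _ ≤ _ := by
        gcongr
        · norm_num
        · omega
  calc σ ^ c * E ≤ 2 ^ c * (p ^ c + τ ^ c) * τ := by gcongr
    _ = _ := by ring

/-- `max (c + 1) 2`. -/
def Bx (c : ℕ) : ℕ := if c = 0 then 2 else c + 1

lemma ker1 (c : ℕ) (σ p τ E Q : ℝ) (hσ : 0 ≤ σ) (hp : 1 ≤ p) (ht : 1 ≤ τ) (h : σ ≤ p + τ)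
    (hE : 0 ≤ E) (hE' : E ≤ τ) (hQ : 0 ≤ Q) (h1 : 1 ≤ Q * p ^ 2) (h2 : 1 ≤ Q * p * τ) :
    σ ^ c * E ≤ 2 ^ (c + 1) * (Q * p ^ Bx c * τ ^ (c + 1)) := by
  refine (ker_base c σ p τ E hσ hp ht h hE hE').trans ?_
  have hp0 : 0 ≤ p := by linarith
  have ht0 : 0 ≤ τ := by linarith
  have a1 : τ ^ (c + 1) ≤ Q * p ^ Bx c * τ ^ (c + 1) := by
    apply le_mul_of_one_le_left (by positivity)
    refine h1.trans ?_
    gcongr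
    · unfold Bx; split_ifs <;> omega
  have a2 : p ^ c * τ ≤ Q * p ^ Bx c * τ ^ (c + 1) := by
    unfold Bx
    split_ifs with hc
    · subst hc
      simp only [pow_zero, zero_add, pow_one]
      gcongr
    · calc p ^ c * τ ≤ p ^ c * τ ^ c := by
            gcongr
            exact le_self_pow₀ ht hc
        _ ≤ (Q * p * τ) * (p ^ c * τ ^ c) := le_mul_of_one_le_left (by positivity) h2
        _ = _ := by ring
  calc 2 ^ c * (p ^ c * τ + τ ^ (c + 1))
      ≤ 2 ^ c * (Q * p ^ Bx c * τ ^ (c + 1) + Q * p ^ Bx c * τ ^ (c + 1)) := by gcongr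
    _ = _ := by ring

lemma ker2 (c : ℕ) (σ p τ E Q : ℝ) (hσ : 0 ≤ σ) (hp : 1 ≤ p) (ht : 1 ≤ τ) (h : σ ≤ p + τ)
    (hE : 0 ≤ E) (hE' : E ≤ τ) (hQ : 0 ≤ Q) (h1 : 1 ≤ Q * p ^ 2) (h2 : 1 ≤ Q * p * τ) :
    σ ^ c * E ≤ 2 ^ (c + 1) * (Q * p ^ (c + 1) * τ ^ Bx c) := by
  refine (ker_base c σ p τ E hσ hp ht h hE hE').trans ?_
  have hp0 : 0 ≤ p := by linarith
  have ht0 : 0 ≤ τ := by linarith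
  have a2 : p ^ c * τ ≤ Q * p ^ (c + 1) * τ ^ Bx c := by
    calc p ^ c * τ ≤ (Q * p * τ) * (p ^ c * τ) := le_mul_of_one_le_left (by positivity) h2
      _ = Q * p ^ (c + 1) * τ ^ 2 := by ring
      _ ≤ _ := by
        gcongr
        · unfold Bx; split_ifs <;> omega
  have a1 : τ ^ (c + 1) ≤ Q * p ^ (c + 1) * τ ^ Bx c := by
    unfold Bx
    split_ifs with hc
    · subst hc
      calc τ ^ (0 + 1) ≤ (Q * p * τ) * τ ^ (0 + 1) := le_mul_of_one_le_left (by positivity) h2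
        _ = _ := by ring
    · apply le_mul_of_one_le_left (by positivity)
      refine h1.trans ?_
      gcongr
      · omega
  calc 2 ^ c * (p ^ c * τ + τ ^ (c + 1))
      ≤ 2 ^ c * (Q * p ^ (c + 1) * τ ^ Bx c + Q * p ^ (c + 1) * τ ^ Bx c) := by gcongr
    _ = _ := by ring

lemma Q_facts (x y : ℝ) (hx : 0 < x) (hy : 0 < y) (Q : ℝ) (hQ : 1 / x ^ 2 + 1 / y ^ 2 ≤ Q) :
    1 ≤ Q * x ^ 2 ∧ 1 ≤ Q * x * y := by
  have hx2 : 0 < 1 / x ^ 2 := by positivity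
  have hy2 : 0 < 1 / y ^ 2 := by positivity
  constructor
  · have : 1 / x ^ 2 ≤ Q := by linarith
    rwa [div_le_iff₀ (by positivity)] at this
  · have : 1 ≤ (1 / x ^ 2 + 1 / y ^ 2) * (x * y) := by
      rw [div_add_div _ _ (by positivity) (by positivity), div_mul_eq_mul_div,
        le_div_iff₀ (by positivity)]
      have hxy : 0 < x * y := by positivity
      nlinarith [sq_nonneg (x - y)]
    calc 1 ≤ _ := this
      _ ≤ Q * (x * y) := by gcongr
      _ = _ := by ring

lemma ker_pos1 (c : ℕ) : KerB (2 ^ (c + 1)) ((c : ℤ) + 1) (Bx c) ((c : ℤ) + 1) ((c : ℤ) + 1 + 1) := by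
  intro p q s E hp hq hs t1 t2 t3 hE hEq hEs
  set Q := 1 / p ^ 2 + 1 / q ^ 2 + 1 / s ^ 2 with hQ
  have hQ0 : 0 ≤ Q := by positivity
  have hs2 : 0 ≤ 1 / s ^ 2 := by positivity
  obtain ⟨f1, f2⟩ := Q_facts p q (by linarith) (by linarith) Q (by linarith)
  have := ker1 c s p q E Q (by linarith) hp hq t1 hE hEq hQ0 f1 f2
  have e1 : s ^ (2 * ((c : ℤ) + 1)) = s ^ (c + 2) * s ^ c := by
    rw [← pow_add, ← zpow_natCast]; congr 1; push_cast; ring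
  have e2 : s ^ ((c : ℤ) + 1 + 1) = s ^ (c + 2) := by
    rw [← zpow_natCast]; congr 1
  have e3 : q ^ ((c : ℤ) + 1) = q ^ (c + 1) := by
    rw [← zpow_natCast]; congr 1
  rw [e1, e2, e3, zpow_natCast]
  have hs0 : 0 ≤ s ^ (c + 2) := by positivity
  calc s ^ (c + 2) * s ^ c * E = s ^ (c + 2) * (s ^ c * E) := by ring
    _ ≤ s ^ (c + 2) * (2 ^ (c + 1) * (Q * p ^ Bx c * q ^ (c + 1))) := by gcongr
    _ = _ := by ring

lemma ker_pos2 (c : ℕ) : KerB (2 ^ (c + 1)) ((c : ℤ) + 1) ((c : ℤ) + 1) (Bx c) ((c : ℤ) + 1 + 1) := by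
  intro p q s E hp hq hs t1 t2 t3 hE hEq hEs
  set Q := 1 / p ^ 2 + 1 / q ^ 2 + 1 / s ^ 2 with hQ
  have hQ0 : 0 ≤ Q := by positivity
  have hs2 : 0 ≤ 1 / s ^ 2 := by positivity
  obtain ⟨f1, f2⟩ := Q_facts p q (by linarith) (by linarith) Q (by linarith)
  have := ker2 c s p q E Q (by linarith) hp hq t1 hE hEq hQ0 f1 f2
  have e1 : s ^ (2 * ((c : ℤ) + 1)) = s ^ (c + 2) * s ^ c := by
    rw [← pow_add, ← zpow_natCast]; congr 1; push_cast; ring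
  have e2 : s ^ ((c : ℤ) + 1 + 1) = s ^ (c + 2) := by
    rw [← zpow_natCast]; congr 1
  have e3 : p ^ ((c : ℤ) + 1) = p ^ (c + 1) := by
    rw [← zpow_natCast]; congr 1
  rw [e1, e2, e3, zpow_natCast]
  have hs0 : 0 ≤ s ^ (c + 2) := by positivity
  calc s ^ (c + 2) * s ^ c * E = s ^ (c + 2) * (s ^ c * E) := by ring
    _ ≤ s ^ (c + 2) * (2 ^ (c + 1) * (Q * p ^ (c + 1) * q ^ Bx c)) := by gcongr
    _ = _ := by ring

lemma ker_neg1 (c : ℕ) : KerB (2 ^ (c + 1)) (-((c : ℤ) + 1)) (Bx c) (-((c : ℤ) + 1) + 1)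
    (-((c : ℤ) + 1)) := by
  intro p q s E hp hq hs t1 t2 t3 hE hEq hEs
  set Q := 1 / p ^ 2 + 1 / q ^ 2 + 1 / s ^ 2 with hQ
  have hQ0 : 0 ≤ Q := by positivity
  have hq2 : 0 ≤ 1 / q ^ 2 := by positivity
  obtain ⟨f1, f2⟩ := Q_facts p s (by linarith) (by linarith) Q (by linarith)
  have := ker1 c q p s E Q (by linarith) hp hs t3 hE hEs hQ0 f1 f2
  have e1 : s ^ (2 * -((c : ℤ) + 1)) = (s ^ (c + 1) * s ^ (c + 1))⁻¹ := by
    rw [← pow_add, ← zpow_natCast, ← zpow_neg]; congr 1; push_cast; ring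
  have e2 : s ^ (-((c : ℤ) + 1)) = (s ^ (c + 1))⁻¹ := by
    rw [← zpow_natCast, ← zpow_neg]; congr 1
  have e3 : q ^ (-((c : ℤ) + 1) + 1) = (q ^ c)⁻¹ := by
    rw [← zpow_natCast, ← zpow_neg]; congr 1; ring
  rw [e1, e2, e3, zpow_natCast]
  have hs0 : 0 < s ^ (c + 1) := by positivity
  have hq0 : 0 < q ^ c := by positivity
  calc (s ^ (c + 1) * s ^ (c + 1))⁻¹ * E
      = (s ^ (c + 1) * s ^ (c + 1))⁻¹ * (q ^ c)⁻¹ * (q ^ c * E) := by field_simp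
    _ ≤ (s ^ (c + 1) * s ^ (c + 1))⁻¹ * (q ^ c)⁻¹ *
          (2 ^ (c + 1) * (Q * p ^ Bx c * s ^ (c + 1))) := by gcongr
    _ = _ := by field_simp

lemma ker_neg2 (c : ℕ) : KerB (2 ^ (c + 1)) (-((c : ℤ) + 1)) (-((c : ℤ) + 1) + 1) (Bx c)
    (-((c : ℤ) + 1)) := by
  intro p q s E hp hq hs t1 t2 t3 hE hEq hEs
  set Q := 1 / p ^ 2 + 1 / q ^ 2 + 1 / s ^ 2 with hQ
  have hQ0 : 0 ≤ Q := by positivity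
  have hp2 : 0 ≤ 1 / p ^ 2 := by positivity
  obtain ⟨f1, f2⟩ := Q_facts q s (by linarith) (by linarith) Q (by linarith)
  have := ker1 c p q s E Q (by linarith) hq hs t2 hE hEs hQ0 f1 f2
  have e1 : s ^ (2 * -((c : ℤ) + 1)) = (s ^ (c + 1) * s ^ (c + 1))⁻¹ := by
    rw [← pow_add, ← zpow_natCast, ← zpow_neg]; congr 1; push_cast; ring
  have e2 : s ^ (-((c : ℤ) + 1)) = (s ^ (c + 1))⁻¹ := by
    rw [← zpow_natCast, ← zpow_neg]; congr 1
  have e3 : p ^ (-((c : ℤ) + 1) + 1) = (p ^ c)⁻¹ := by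
    rw [← zpow_natCast, ← zpow_neg]; congr 1; ring
  rw [e1, e2, e3, zpow_natCast]
  have hs0 : 0 < s ^ (c + 1) := by positivity
  have hq0 : 0 < p ^ c := by positivity
  calc (s ^ (c + 1) * s ^ (c + 1))⁻¹ * E
      = (s ^ (c + 1) * s ^ (c + 1))⁻¹ * (p ^ c)⁻¹ * (p ^ c * E) := by field_simp
    _ ≤ (s ^ (c + 1) * s ^ (c + 1))⁻¹ * (p ^ c)⁻¹ *
          (2 ^ (c + 1) * (Q * q ^ Bx c * s ^ (c + 1))) := by gcongr
    _ = _ := by field_simp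

lemma ker_zero : KerB 1 0 1 1 1 := by
  intro p q s E hp hq hs t1 t2 t3 hE hEq hEs
  set Q := 1 / p ^ 2 + 1 / q ^ 2 + 1 / s ^ 2 with hQ
  have hq2 : 0 ≤ 1 / q ^ 2 := by positivity
  obtain ⟨f1, f2⟩ := Q_facts p s (by linarith) (by linarith) Q (by linarith)
  simp only [mul_zero, zpow_zero, one_mul, zpow_one]
  calc E ≤ q := hEq
    _ ≤ (Q * p * s) * q := le_mul_of_one_le_left (by linarith) f2
    _ = _ := by ring

/-! ### The critical case `a = 0` -/

lemma knormSq_fneg (k : Freq) : knormSq (fneg k) = knormSq k := by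
  unfold knormSq fneg; simp

lemma evec_fneg (k : Freq) : evec (fneg k) = ((-(evec k).1, -(evec k).2) : ℝ × ℝ) := by
  unfold evec
  rw [knormSq_fneg]
  unfold fneg
  simp [neg_div]

lemma fneg_fneg (k : Freq) : fneg (fneg k) = k := by
  apply Subtype.ext
  simp [fneg]

/-- The involution `(k, m) ↦ (m - k, m)`. -/
def invo (p : Freq × Freq) : Freq × Freq :=
  if h : p.1.1 - p.2.1 ≠ 0 then (fneg ⟨p.1.1 - p.2.1, h⟩, p.2) else p

lemma invo_of (k m n : Freq) (h : n.1 = k.1 - m.1) : invo (k, m) = (fneg n, m) := by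
  have h' : k.1 - m.1 ≠ 0 := h ▸ n.2
  have hn : n = ⟨k.1 - m.1, h'⟩ := Subtype.ext h
  subst hn
  unfold invo
  rw [dif_pos h']

lemma invo_shift (k m n : Freq) (h : n.1 = k.1 - m.1) : (fneg k).1 = (fneg n).1 - m.1 := by
  unfold fneg
  simp only
  rw [h]; abel

lemma invo_zero (k m : Freq) (h : k.1 - m.1 = 0) : invo (k, m) = (k, m) := by
  unfold invo
  rw [dif_neg (by simpa using h)]

lemma invo_invo : Function.Involutive invo := by
  rintro ⟨k, m⟩
  by_cases h : k.1 - m.1 = 0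
  · rw [invo_zero k m h, invo_zero k m h]
  · obtain ⟨n, hn⟩ : ∃ n : Freq, n.1 = k.1 - m.1 := ⟨⟨k.1 - m.1, h⟩, rfl⟩
    rw [invo_of k m n hn, invo_of (fneg n) m (fneg k) (invo_shift k m n hn), fneg_fneg]

lemma FF_invo (v w : Coef) (hw : IsReal w) (p : Freq × Freq) :
    FF 0 v w w (invo p) = - FF 0 v w w p := by
  obtain ⟨k, m⟩ := p
  by_cases h : k.1 - m.1 = 0
  · rw [invo_zero k m h, FF_zero 0 v w w k m h, neg_zero]
  · obtain ⟨n, hn⟩ : ∃ n : Freq, n.1 = k.1 - m.1 := ⟨⟨k.1 - m.1, h⟩, rfl⟩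
    rw [invo_of k m n hn, FF_eq 0 v w w (fneg n) m (fneg k) (invo_shift k m n hn),
      FF_eq 0 v w w k m n hn, hw k, hw n]
    have d1 : dotR (evec m) (fvec (fneg k)) = - dotR (evec m) (fvec n) := by
      rw [dot_shift k m n hn]
      unfold dotR fvec fneg
      simp; ring
    have d2 : dotR (evec (fneg k)) (evec (fneg n)) = dotR (evec n) (evec k) := by
      rw [evec_fneg, evec_fneg]
      unfold dotR
      simp only
      ring
    rw [d1, d2]
    simp only [Real.rpow_zero, map_neg, Complex.conj_conj]
    push_cast
    ring

lemma hInner_zero (v w : Coef) (hv : FinH ((1 : ℤ) : ℝ) v) (hw : IsReal w)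
    (hw1 : FinH ((1 : ℤ) : ℝ) w) : hInner ((0 : ℤ) : ℝ) (Bc v w) w = 0 := by
  have hs := (noncrit 1 zero_le_one 0 1 1 1 ker_zero v w w hv hw1 hw1).1
  rw [hInner_eq _ _ _ _ hs]
  have h0 : ((0 : ℤ) : ℝ) = 0 := Int.cast_zero
  rw [h0]
  have e1 : ∑' p, FF 0 v w w (invo p) = ∑' p, FF 0 v w w p :=
    (invo_invo.toPerm invo).tsum_eq (FF 0 v w w)
  simp only [FF_invo v w hw, tsum_neg] at e1
  have : ∑' p, FF 0 v w w p = 0 := by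
    have h2 : (2 : ℂ) * ∑' p, FF 0 v w w p = 0 := by linear_combination -e1
    simpa using h2
  rw [this]; rfl

lemma crit (v w : Coef) (hv : FinH ((1 : ℤ) : ℝ) v) (hw1 : FinH ((1 : ℤ) : ℝ) w) :
    |hInner ((0 : ℤ) : ℝ) (Bc w v) w| ≤
      30 * hN ((1 : ℤ) : ℝ) v * hN ((0 : ℤ) : ℝ) w * hN ((1 : ℤ) : ℝ) w := by
  have hw0 : FinH ((0 : ℤ) : ℝ) w := FinH_mono _ _ (by norm_num) w hw1
  have n0 : 0 ≤ hN ((0 : ℤ) : ℝ) w := Real.sqrt_nonneg _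
  have n1 : 0 ≤ hN ((1 : ℤ) : ℝ) w := Real.sqrt_nonneg _
  have nv : 0 ≤ hN ((1 : ℤ) : ℝ) v := Real.sqrt_nonneg _
  have t0 : ∀ k, 0 ≤ lam k ^ ((0 : ℤ) : ℝ) * ‖w k‖ ^ 2 := fun k => by simp
  have t1 : ∀ k, 0 ≤ lam k ^ ((1 : ℤ) : ℝ) * ‖w k‖ ^ 2 := fun k => by
    have := (lam_pos k).le
    simp only [Int.cast_one, Real.rpow_one]; positivity
  have q0 : hN ((0 : ℤ) : ℝ) w ^ 2 = hSq ((0 : ℤ) : ℝ) w := Real.sq_sqrt (tsum_nonneg t0)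
  have q1 : hN ((1 : ℤ) : ℝ) w ^ 2 = hSq ((1 : ℤ) : ℝ) w := Real.sq_sqrt (tsum_nonneg t1)
  rcases n0.eq_or_lt with hz | hpos
  · have hs0 : hSq ((0 : ℤ) : ℝ) w = 0 := by rw [← q0, ← hz]; simp
    have hall : w = 0 := by
      have hsum : HasSum (fun k => lam k ^ ((0 : ℤ) : ℝ) * ‖w k‖ ^ 2) 0 := by
        rw [← hs0]; exact hw0.hasSum
      have := (hasSum_zero_iff_of_nonneg t0).mp hsum
      funext k
      simpa using congrFun this k
    have : hInner ((0 : ℤ) : ℝ) (Bc w v) w = 0 := by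
      unfold hInner; simp [hall]
    rw [this, abs_zero]; positivity
  · set N := hN ((1 : ℤ) : ℝ) w / hN ((0 : ℤ) : ℝ) w with hNdef
    have hle : hN ((0 : ℤ) : ℝ) w ≤ hN ((1 : ℤ) : ℝ) w := by
      apply Real.sqrt_le_sqrt
      refine hw0.tsum_le_tsum (fun k => ?_) hw1
      have := lam_ge k
      gcongr
      norm_num
    have hN1 : 1 ≤ N := (one_le_div hpos).mpr hle
    have hN0 : 0 < N := by linarith
    obtain ⟨sP, bP⟩ := PN_sum N hN1
    let g : Freq → ℝ := fun k => 1 + knormSq k / N ^ 2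
    have hg : ∀ k, 1 ≤ g k := fun k => by
      have : 0 ≤ knormSq k / N ^ 2 := by
        have := knormSq_ge k
        positivity
      simp only [g]; linarith
    have hPg : ∀ k, PN N k.1 = 1 / g k := fun k => rfl
    let X : Freq → ℝ := fun k => Real.sqrt (g k) * ‖w k‖
    have hX : ∀ k, 0 ≤ X k := fun k => by positivity
    have hX2 : ∀ k, X k ^ 2 ≤ lam k ^ ((0 : ℤ) : ℝ) * ‖w k‖ ^ 2
        + 1 / N ^ 2 * (lam k ^ ((1 : ℤ) : ℝ) * ‖w k‖ ^ 2) := fun k => by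
      simp only [X, mul_pow]
      rw [Real.sq_sqrt (by linarith [hg k])]
      simp only [g, Int.cast_zero, Int.cast_one, Real.rpow_zero, Real.rpow_one]
      have h1 : knormSq k / N ^ 2 ≤ lam k / N ^ 2 := by
        gcongr
        exact knormSq_le_lam k
      have h2 : knormSq k / N ^ 2 * ‖w k‖ ^ 2 ≤ lam k / N ^ 2 * ‖w k‖ ^ 2 := by gcongr
      calc _ = ‖w k‖ ^ 2 + knormSq k / N ^ 2 * ‖w k‖ ^ 2 := by ring
        _ ≤ ‖w k‖ ^ 2 + lam k / N ^ 2 * ‖w k‖ ^ 2 := by linarith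
        _ = _ := by ring
    have sR := hw0.add (hw1.mul_left (1 / N ^ 2))
    have sX : Summable fun k => X k ^ 2 :=
      Summable.of_nonneg_of_le (fun k => sq_nonneg _) hX2 sR
    have bX : N2 X * N2 X ≤ 2 * hN ((0 : ℤ) : ℝ) w ^ 2 := by
      have : N2 X * N2 X = ∑' k, X k ^ 2 := Real.mul_self_sqrt (tsum_nonneg fun k => sq_nonneg _)
      rw [this]
      refine (sX.tsum_le_tsum hX2 sR).trans ?_
      rw [hw0.tsum_add (hw1.mul_left (1 / N ^ 2)), tsum_mul_left]
      change hSq ((0 : ℤ) : ℝ) w + 1 / N ^ 2 * hSq ((1 : ℤ) : ℝ) w ≤ _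
      rw [← q0, ← q1, hNdef]
      have hp1 : 0 < hN ((1 : ℤ) : ℝ) w := by linarith
      apply le_of_eq
      field_simp
      ring
    have hcore := (core ((0 : ℤ) : ℝ) w v w X (WW 1 v) X (PN N) hX (WW_nonneg 1 v) hX (PN_nonneg N)
      sX (WW_summable 1 v hv) sX sP ?_).2
    · refine hcore.trans ?_
      rw [WW_N2]
      have hnp := N2_nonneg (PN N)
      have hnx := N2_nonneg X
      calc _ = 3 * (N2 X * N2 X * hN ((1 : ℤ) : ℝ) v * N2 (PN N)) := by ring
        _ ≤ 3 * (2 * hN ((0 : ℤ) : ℝ) w ^ 2 * hN ((1 : ℤ) : ℝ) v * (5 * N)) := by gcongr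
        _ = _ := by rw [hNdef]; field_simp; ring
    · intro k m n h
      have hE := EE_le m n
      have hE0 := EE_nonneg m n
      rw [hPg, hPg, hPg]
      have gm : 0 < Real.sqrt (g m) := Real.sqrt_pos.mpr (by linarith [hg m])
      have gk : 0 < Real.sqrt (g k) := Real.sqrt_pos.mpr (by linarith [hg k])
      have gn : 0 ≤ 1 / g n := by have := hg n; positivity
      have sm : Real.sqrt (g m) ^ 2 = g m := Real.sq_sqrt (by linarith [hg m])
      have sk : Real.sqrt (g k) ^ 2 = g k := Real.sq_sqrt (by linarith [hg k])
      obtain ⟨-, f2⟩ := Q_facts (Real.sqrt (g m)) (Real.sqrt (g k)) gm gk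
        (1 / g m + 1 / g n + 1 / g k) (by rw [sm, sk]; linarith)
      simp only [Int.cast_zero, Real.rpow_zero, one_mul, WW, zpow_one, X]
      have hr := rr_pos n
      calc ‖w m‖ * ‖v n‖ * ‖w k‖ * EE m n ≤ ‖w m‖ * ‖v n‖ * ‖w k‖ * rr n := by gcongr
        _ ≤ ((1 / g m + 1 / g n + 1 / g k) * Real.sqrt (g m) * Real.sqrt (g k)) *
            (‖w m‖ * ‖v n‖ * ‖w k‖ * rr n) := le_mul_of_one_le_left (by positivity) f2
        _ = _ := by ring

/-! ### Assembly -/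

lemma astar_succ (c : ℕ) : astar ((c : ℤ) + 1) = (Bx c : ℤ) := by
  unfold astar Bx
  rw [abs_of_nonneg (by positivity)]
  split_ifs <;> first | omega | (push_cast; omega)

lemma astar_neg (c : ℕ) : astar (-((c : ℤ) + 1)) = (Bx c : ℤ) := by
  rw [← astar_succ]
  unfold astar
  rw [abs_neg]

lemma nonzero_case (K : ℝ) (hK : 0 < K) (a B : ℤ)
    (h1 : KerB K a B a (a + 1) ∨ KerB K a B (a + 1) a)
    (h2 : KerB K a a B (a + 1) ∨ KerB K a (a + 1) B a) (v w : Coef)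
    (hv : FinH (B : ℝ) v) (hw : FinH ((a : ℝ) + 1) w) :
    |hInner (a : ℝ) (Bc v w) w| + |hInner (a : ℝ) (Bc w v) w| ≤
          60 * K * hN (B : ℝ) v * hN (a : ℝ) w * hN ((a : ℝ) + 1) w := by
  have hw0 : FinH (a : ℝ) w := FinH_mono _ _ (by linarith) w hw
  have e : (a : ℝ) + 1 = ((a + 1 : ℤ) : ℝ) := by push_cast; ring
  rw [e] at hw ⊢
  have b1 : |hInner (a : ℝ) (Bc v w) w| ≤
      30 * K * hN (B : ℝ) v * hN (a : ℝ) w * hN ((a + 1 : ℤ) : ℝ) w := by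
    rcases h1 with h | h
    · exact (noncrit K hK.le _ _ _ _ h v w w hv hw0 hw).2
    · refine (noncrit K hK.le _ _ _ _ h v w w hv hw hw0).2.trans (le_of_eq ?_)
      ring
  have b2 : |hInner (a : ℝ) (Bc w v) w| ≤
      30 * K * hN (B : ℝ) v * hN (a : ℝ) w * hN ((a + 1 : ℤ) : ℝ) w := by
    rcases h2 with h | h
    · refine (noncrit K hK.le _ _ _ _ h w v w hw0 hv hw).2.trans (le_of_eq ?_)
      ring
    · refine (noncrit K hK.le _ _ _ _ h w v w hw hv hw0).2.trans (le_of_eq ?_)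
      ring
  linarith

/-- Proposition `PropBilinearFormEstimates`. For `a ∈ ℤ`
with `a* = |a|+1` if `|a| ≤ 1` and `a* = |a|` if `|a| ≥ 2`, there is a
constant `C = C(a) > 0` such that for all `v ∈ Ḣ^{a*}_⋄` and
`w ∈ Ḣ^{a+1}_⋄`,
`|⟨B[v,w], w⟩_{Ḣ^a}| + |⟨B[w,v], w⟩_{Ḣ^a}|
   ≤ C ‖v‖_{Ḣ^{a*}} ‖w‖_{Ḣ^a} ‖w‖_{Ḣ^{a+1}}`. -/
theorem statement12 (a : ℤ) :
    ∃ C : ℝ, 0 < C ∧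
      ∀ v w : Coef, MemH (astar a : ℝ) v → MemH ((a : ℝ) + 1) w →
        |hInner (a : ℝ) (Bc v w) w| + |hInner (a : ℝ) (Bc w v) w| ≤
          C * hN (astar a : ℝ) v * hN (a : ℝ) w * hN ((a : ℝ) + 1) w := by
  rcases lt_trichotomy a 0 with ha | ha | ha
  · obtain ⟨c, hc⟩ := Int.eq_ofNat_of_zero_le (show 0 ≤ -a - 1 by omega)
    have hac : a = -((c : ℤ) + 1) := by omega
    have hst : astar a = (Bx c : ℤ) := by rw [hac, astar_neg]
    refine ⟨60 * 2 ^ (c + 1), by positivity, fun v w hv hw => ?_⟩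
    rw [hst] at hv ⊢
    refine nonzero_case (2 ^ (c + 1)) (by positivity) a (Bx c) (Or.inr ?_) (Or.inr ?_) v w
      hv.2 hw.2
    · rw [hac]; exact ker_neg1 c
    · rw [hac]; exact ker_neg2 c
  · subst ha
    refine ⟨30, by norm_num, fun v w hv hw => ?_⟩
    have hst : astar 0 = 1 := by simp [astar]
    rw [hst] at hv ⊢
    have e : ((0 : ℤ) : ℝ) + 1 = ((1 : ℤ) : ℝ) := by simp
    rw [e] at hw ⊢
    rw [hInner_zero v w hv.2 hw.1 hw.2, abs_zero, zero_add]
    exact crit v w hv.2 hw.2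
  · obtain ⟨c, hc⟩ := Int.eq_ofNat_of_zero_le (show 0 ≤ a - 1 by omega)
    have hac : a = (c : ℤ) + 1 := by omega
    have hst : astar a = (Bx c : ℤ) := by rw [hac, astar_succ]
    refine ⟨60 * 2 ^ (c + 1), by positivity, fun v w hv hw => ?_⟩
    rw [hst] at hv ⊢
    refine nonzero_case (2 ^ (c + 1)) (by positivity) a (Bx c) (Or.inl ?_) (Or.inl ?_) v w
      hv.2 hw.2
    · rw [hac]; exact ker_pos1 c
    · rw [hac]; exact ker_pos2 c


end NS2D
end
end

section
/- Fix a ∈ ℝ, T > 0 and ν > 0. Let ℒ : Ḣ_⋄ → L²([0,T], Ḣ_⋄) denote the heat-flow operator, ℒ[h](t) = S_t[h] where S_t[h] = Σ_{j≥1} e^{−νλ_j t} ⟨h, e_j⟩_{L²} e_j, and let ℒ* be its adjoint. Then ℒ*ℒ maps Ḣ^a_⋄ continuously into Ḣ^{a+2}_⋄, and as linear operators on Ḣ^a_⋄ one has the identity Δ ℒ*ℒ = (1/(2ν)) ( S_{2T} − Id ). -/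
open MeasureTheory Set
open scoped BigOperators

noncomputable section

namespace NS2D

lemma knormSq_pos (k : Freq) : 0 < knormSq k := by
  unfold knormSq
  have h := k.2
  by_cases h1 : k.1.1 = 0
  · have h2 : k.1.2 ≠ 0 := fun h2 => h (Prod.ext h1 h2)
    have : (k.1.2 : ℝ) ≠ 0 := by exact_mod_cast h2
    positivity
  · have : (k.1.1 : ℝ) ≠ 0 := by exact_mod_cast h1
    positivity

lemma lam_fneg (k : Freq) : lam (fneg k) = lam k := by
  simp [lam, knormSq, fneg]

lemma fneg_ne (k : Freq) : fneg k ≠ k := by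
  intro h
  have h0 : -k.1 = k.1 := congrArg Subtype.val h
  have h1 : -k.1.1 = k.1.1 := congrArg Prod.fst h0
  have h2 : -k.1.2 = k.1.2 := congrArg Prod.snd h0
  exact k.2 (Prod.ext (show k.1.1 = 0 by omega) (show k.1.2 = 0 by omega))

open Classical in
/-- Real test field supported at `k` and `-k`. -/
def tst (k : Freq) (z : ℂ) : Coef := fun j =>
  if j = k then z else if j = fneg k then -(starRingEnd ℂ) z else 0

lemma tst_self (k : Freq) (z : ℂ) : tst k z k = z := by simp [tst]

lemma tst_neg (k : Freq) (z : ℂ) : tst k z (fneg k) = -(starRingEnd ℂ) z := by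
  simp [tst, fneg_ne]

lemma tst_off (k : Freq) (z : ℂ) (j : Freq) (h1 : j ≠ k) (h2 : j ≠ fneg k) : tst k z j = 0 := by
  simp [tst, h1, h2]

open Classical in
lemma tst_mem (k : Freq) (z : ℂ) : MemHinf (tst k z) := by
  intro α
  refine ⟨?_, ?_⟩
  · intro j
    by_cases h1 : j = k
    · subst h1; rw [tst_neg, tst_self]
    by_cases h2 : j = fneg k
    · subst h2; rw [fneg_fneg, tst_neg, tst_self]; simp
    rw [tst_off k z j h1 h2, tst_off]
    · simp
    · intro h; exact h2 (by rw [← h, fneg_fneg])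
    · intro h; exact h1 (by rw [← fneg_fneg j, h, fneg_fneg])
  · apply summable_of_ne_finset_zero (s := {k, fneg k})
    intro j hj
    simp only [Finset.mem_insert, Finset.mem_singleton, not_or] at hj
    rw [tst_off k z j hj.1 hj.2]; simp

open Classical in
lemma innerC_two (k : Freq) (c d : Coef) (hd : ∀ j, j ≠ k → j ≠ fneg k → d j = 0) :
    innerC c d = c k * (starRingEnd ℂ) (d k)
      + c (fneg k) * (starRingEnd ℂ) (d (fneg k)) := by
  unfold innerC
  rw [tsum_eq_sum (s := {k, fneg k}), Finset.sum_pair (fneg_ne k).symm]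
  intro j hj
  simp only [Finset.mem_insert, Finset.mem_singleton, not_or] at hj
  rw [hd j hj.1 hj.2]; simp

/-- The multiplier of the operator. -/
def mult (ν T : ℝ) (k : Freq) : ℝ := (1 - Real.exp (-(ν * lam k * (2 * T)))) / (2 * (ν * lam k))

lemma integral_exp_mult (ν T : ℝ) (hν : 0 < ν) (k : Freq) :
    ∫ t in (0:ℝ)..T, Real.exp (-(ν * lam k * t)) * Real.exp (-(ν * lam k * t)) = mult ν T k := by
  have hl0 : lam k ≠ 0 := (lam_pos k).ne'
  have hd : ∀ t ∈ uIcc (0:ℝ) T,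
      HasDerivAt (fun t => -Real.exp (-(ν * lam k * (2 * t))) / (2 * (ν * lam k)))
        (Real.exp (-(ν * lam k * t)) * Real.exp (-(ν * lam k * t))) t := by
    intro t _
    have h1 : HasDerivAt (fun t : ℝ => -(ν * lam k * (2 * t))) (-(ν * lam k * (2 * 1))) t :=
      (((hasDerivAt_id t).const_mul 2).const_mul (ν * lam k)).neg
    have h2 := (h1.exp.neg).div_const (2 * (ν * lam k))
    have h3 : Real.exp (-(ν * lam k * t)) * Real.exp (-(ν * lam k * t)) =
        -(Real.exp (-(ν * lam k * (2 * t))) * -(ν * lam k * (2 * 1))) / (2 * (ν * lam k)) := by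
      rw [← Real.exp_add]
      rw [show -(ν * lam k * t) + -(ν * lam k * t) = -(ν * lam k * (2 * t)) by ring]
      field_simp
    rw [h3]
    exact h2
  rw [intervalIntegral.integral_eq_sub_of_hasDerivAt hd]
  · simp [mult]; ring
  · apply Continuous.intervalIntegrable
    fun_prop

lemma key (α T ν : ℝ) (hν : 0 < ν) (M : Coef → Coef)
    (hM : ∀ h, MemH α h → ∀ g, MemHinf g →
      innerC (M h) g = ∫ t in (0:ℝ)..T, innerC (heatS ν t h) (heatS ν t g))
    (h : Coef) (hh : MemH α h) (k : Freq) : M h k = (mult ν T k : ℂ) * h k := by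
  have E : ∀ z : ℂ, M h k * (starRingEnd ℂ) z - M h (fneg k) * z
      = (mult ν T k : ℂ) * (h k * (starRingEnd ℂ) z - h (fneg k) * z) := by
    intro z
    have e := hM h hh (tst k z) (tst_mem k z)
    rw [innerC_two k _ _ (tst_off k z), tst_self, tst_neg] at e
    have e2 : ∀ t, innerC (heatS ν t h) (heatS ν t (tst k z)) =
        ((Real.exp (-(ν * lam k * t)) * Real.exp (-(ν * lam k * t)) : ℝ) : ℂ) *
          (h k * (starRingEnd ℂ) z - h (fneg k) * z) := by
      intro t
      rw [innerC_two k]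
      · simp only [heatS, tst_self, tst_neg, lam_fneg, map_mul, map_neg, Complex.conj_ofReal,
          Complex.conj_conj]
        push_cast
        ring
      · intro j h1 h2
        simp [heatS, tst_off k z j h1 h2]
    simp only [e2] at e
    rw [intervalIntegral.integral_mul_const, intervalIntegral.integral_ofReal,
      integral_exp_mult ν T hν] at e
    rw [← e]
    simp
    ring
  have e1 := E 1
  have e2 := E Complex.I
  simp only [map_one, Complex.conj_I] at e1 e2
  have I2 := Complex.I_mul_I
  linear_combination (1/2) * e1 + (1/2) * Complex.I * e2 +
    (1/2) * (M h k + M h (fneg k) - (mult ν T k : ℂ) * (h k + h (fneg k))) * I2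

lemma mult_bd (ν T : ℝ) (hT : 0 < T) (hν : 0 < ν) (k : Freq) :
    0 ≤ mult ν T k ∧ mult ν T k * lam k ≤ 1 / (2 * ν) := by
  have hl := lam_pos k
  have h1 : Real.exp (-(ν * lam k * (2 * T))) ≤ 1 := by
    rw [Real.exp_le_one_iff]
    have : 0 < ν * lam k * (2 * T) := by positivity
    linarith
  have h2 := Real.exp_pos (-(ν * lam k * (2 * T)))
  constructor
  · unfold mult
    apply div_nonneg (by linarith) (by positivity)
  · have : mult ν T k * lam k = (1 - Real.exp (-(ν * lam k * (2 * T)))) / (2 * ν) := by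
      unfold mult; field_simp
    rw [this]
    gcongr
    linarith

/-- Proposition `PropLstarL`. Let `ℒ[h](t) = S_t[h]` be the
heat flow and `ℒ*` its adjoint with respect to the `L²([0,T], Ḣ_⋄)` inner
product. Any operator `M = ℒ*ℒ`, characterised by
`⟨M h, g⟩_{L²} = ∫₀ᵀ ⟨S_t h, S_t g⟩_{L²} dt` for test fields `g`, maps
`Ḣ^α_⋄` continuously into `Ḣ^{α+2}_⋄`, and on `Ḣ^α_⋄` satisfies the operator
identity `Δ ℒ*ℒ = (1/(2ν)) (S_{2T} − Id)`. -/
theorem statement15 (α : ℝ) (T ν : ℝ) (hT : 0 < T) (hν : 0 < ν)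
    (M : Coef → Coef)
    (hM : ∀ h, MemH α h → ∀ g, MemHinf g →
      innerC (M h) g = ∫ t in (0:ℝ)..T, innerC (heatS ν t h) (heatS ν t g)) :
    (∃ C : ℝ, 0 < C ∧ ∀ h, MemH α h →
      MemH (α + 2) (M h) ∧ hN (α + 2) (M h) ≤ C * hN α h) ∧
    (∀ h, MemH α h →
      lapC (M h) = (1 / (2 * ν)) • (heatS ν (2 * T) h - h)) := by
  have K := key α T ν hν M hM
  refine ⟨⟨1 / (2 * ν), by positivity, ?_⟩, ?_⟩
  · intro h hh
    have bd : ∀ k, lam k ^ (α + 2) * ‖M h k‖ ^ 2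
        ≤ (1 / (2 * ν)) ^ 2 * (lam k ^ α * ‖h k‖ ^ 2) := by
      intro k
      have hl := lam_pos k
      obtain ⟨h0, h1⟩ := mult_bd ν T hT hν k
      rw [K h hh k, norm_mul, Complex.norm_real, Real.norm_eq_abs, abs_of_nonneg h0,
        Real.rpow_add hl, Real.rpow_two]
      have h2 : (mult ν T k * lam k) ^ 2 ≤ (1 / (2 * ν)) ^ 2 :=
        pow_le_pow_left₀ (by positivity) h1 2
      have h3 : 0 ≤ lam k ^ α * ‖h k‖ ^ 2 := by positivity
      calc _ = (mult ν T k * lam k) ^ 2 * (lam k ^ α * ‖h k‖ ^ 2) := by ring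
        _ ≤ _ := mul_le_mul_of_nonneg_right h2 h3
    have hs : Summable fun k => (1 / (2 * ν)) ^ 2 * (lam k ^ α * ‖h k‖ ^ 2) :=
      hh.2.mul_left _
    have hf : FinH (α + 2) (M h) := by
      refine Summable.of_nonneg_of_le (fun k => ?_) bd hs
      have hl := lam_pos k
      positivity
    refine ⟨⟨?_, hf⟩, ?_⟩
    · intro k
      rw [K h hh, K h hh, hh.1 k]
      have hm : mult ν T (fneg k) = mult ν T k := by simp only [mult, lam_fneg]
      rw [hm, map_mul, Complex.conj_ofReal]
      ring
    · have : hSq (α + 2) (M h) ≤ (1 / (2 * ν)) ^ 2 * hSq α h := by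
        unfold hSq
        rw [← tsum_mul_left]
        exact Summable.tsum_le_tsum bd hf hs
      unfold hN
      calc _ ≤ Real.sqrt ((1 / (2 * ν)) ^ 2 * hSq α h) := Real.sqrt_le_sqrt this
        _ = _ := by
          rw [Real.sqrt_mul (by positivity), Real.sqrt_sq (by positivity)]
  · intro h hh
    funext k
    have hl : (lam k : ℂ) ≠ 0 := by exact_mod_cast (lam_pos k).ne'
    have hn : (ν : ℂ) ≠ 0 := by exact_mod_cast hν.ne'
    simp only [lapC, Pi.smul_apply, Pi.sub_apply, heatS, K h hh k, mult, Complex.real_smul]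
    push_cast
    field_simp
    ring

end NS2D
end
end
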